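/- arXiv:2511.16629 — 4 statements merged into one kernel-verified Lean document; each statement's English description precedes it below -/
import Mathlib

section
/- Let H be a finite-dimensional real inner product space, A a nonempty finite type, and φ : A → H with ‖φ(b)‖ ≤ 1 for all b ∈ A. Fix a ∈ A and define f : H → ℝ by f(θ) = −⟪φ(a), θ⟫ − log(∑_{b ∈ A} exp(−⟪φ(b), θ⟫)). Then for every θ ∈ H, the gradient of f at θ has norm at most 2. -/
open Real RealInnerProductSpace Finset

/-- **Bounded score function of the softmax policy**: if the feature vectors satisfy
`‖φ b‖ ≤ 1`, then the gradient of the log-softmax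
`f θ = −⟪φ a, θ⟫ − log ∑_b exp(−⟪φ b, θ⟫)` has norm at most `2` everywhere. -/
theorem gradient_log_softmax_norm_le_two
    {H : Type*} [NormedAddCommGroup H] [InnerProductSpace ℝ H] [FiniteDimensional ℝ H]
    {A : Type*} [Fintype A] [Nonempty A]
    (φ : A → H) (hφ : ∀ b, ‖φ b‖ ≤ 1) (a : A)
    (f : H → ℝ)
    (hf : f = fun θ => -⟪φ a, θ⟫ - Real.log (∑ b, Real.exp (-⟪φ b, θ⟫))) :
    ∀ θ : H, ‖gradient f θ‖ ≤ 2 := by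
  intro θ
  have hin : ∀ b, HasFDerivAt (fun θ : H => -⟪φ b, θ⟫) (-(innerSL ℝ (φ b))) θ :=
    fun b => (innerSL ℝ (φ b)).hasFDerivAt.neg
  have hexp : ∀ b, HasFDerivAt (fun θ : H => Real.exp (-⟪φ b, θ⟫))
      (Real.exp (-⟪φ b, θ⟫) • (-(innerSL ℝ (φ b)))) θ := fun b => (hin b).exp
  have hsum : HasFDerivAt (fun θ : H => ∑ b, Real.exp (-⟪φ b, θ⟫))
      (∑ b, Real.exp (-⟪φ b, θ⟫) • (-(innerSL ℝ (φ b)))) θ :=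
    HasFDerivAt.fun_sum fun b _ => hexp b
  have hpos : 0 < ∑ b, Real.exp (-⟪φ b, θ⟫) :=
    Finset.sum_pos (fun b _ => Real.exp_pos _) Finset.univ_nonempty
  have hF := (hin a).sub (hsum.log hpos.ne')
  have hn : ∀ b, ‖-(innerSL ℝ (φ b))‖ ≤ 1 := fun b => by
    rw [norm_neg, innerSL_apply_norm]; exact hφ b
  have hbound : ‖∑ b, Real.exp (-⟪φ b, θ⟫) • (-(innerSL ℝ (φ b)))‖
      ≤ ∑ b, Real.exp (-⟪φ b, θ⟫) := by
    refine norm_sum_le_of_le _ fun b _ => ?_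
    rw [norm_smul, Real.norm_of_nonneg (Real.exp_pos _).le]
    exact mul_le_of_le_one_right (Real.exp_pos _).le (hn b)
  have hg : ‖gradient f θ‖ = ‖fderiv ℝ f θ‖ := by
    rw [gradient, LinearIsometryEquiv.norm_map]
  have hd : HasFDerivAt f (-(innerSL ℝ (φ a)) - (∑ b, Real.exp (-⟪φ b, θ⟫))⁻¹ •
      ∑ b, Real.exp (-⟪φ b, θ⟫) • (-(innerSL ℝ (φ b)))) θ := by
    rw [hf]; exact hF
  rw [hg, hd.fderiv]
  refine (norm_sub_le _ _).trans ?_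
  have h2 : ‖(∑ b, Real.exp (-⟪φ b, θ⟫))⁻¹ •
      ∑ b, Real.exp (-⟪φ b, θ⟫) • (-(innerSL ℝ (φ b)))‖ ≤ 1 := by
    rw [norm_smul, norm_inv, Real.norm_of_nonneg hpos.le, inv_mul_le_iff₀ hpos, mul_one]
    exact hbound
  linarith [hn a]
end

section
/- Let H be a real inner product space (finite-dimensional), and let V, e : H → ℝ be differentiable functions such that Ṽ := V + e has a gradient that is Lipschitz continuous with constant L ≥ 0, and such that |e(θ)| ≤ ε and ‖∇e(θ)‖ ≤ ε for all θ ∈ H, where ε ≥ 0. Let (Ω, μ) be a probability space, θ₀ ∈ H, η ≥ 0, and let G : Ω → H be measurable with ∫ G dμ = ∇V(θ₀) and ‖G(ω)‖ ≤ G_max almost everywhere. Let Θ' : Ω → H be measurable with V ∘ Θ' integrable and Ṽ(Θ'(ω)) ≥ Ṽ(θ₀ + η • G(ω)) for almost every ω. Then ∫ V(Θ'(ω)) dμ(ω) ≥ V(θ₀) + η ‖∇V(θ₀)‖² − (L/2) η² ∫ ‖G(ω)‖² dμ(ω) − 2ε − η ε ‖∇V(θ₀)‖. -/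
open MeasureTheory Real

/-- Quadratic lower bound for functions with Lipschitz gradient. -/
lemma quad_lower_bound {H : Type*} [NormedAddCommGroup H] [InnerProductSpace ℝ H] [CompleteSpace H]
    (f : H → ℝ) (hf : Differentiable ℝ f) (L : ℝ) (hL : 0 ≤ L)
    (hLip : LipschitzWith ⟨L, hL⟩ (gradient f)) (x v : H) :
    f x + inner ℝ (gradient f x) v - L / 2 * ‖v‖ ^ 2 ≤ f (x + v) := by
  have hd : ∀ t : ℝ, HasDerivAt
      (fun t : ℝ => f (x + t • v) - t * inner ℝ (gradient f x) v + L / 2 * ‖v‖ ^ 2 * t ^ 2)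
      (inner ℝ (gradient f (x + t • v)) v - inner ℝ (gradient f x) v
        + L * ‖v‖ ^ 2 * t) t := by
    intro t
    have h1 : HasDerivAt (fun t : ℝ => x + t • v) v t := by
      simpa using ((hasDerivAt_id t).smul_const v).const_add x
    have h2 := ((hf (x + t • v)).hasGradientAt.hasFDerivAt).comp_hasDerivAt t h1
    have h3 := (h2.sub ((hasDerivAt_id t).mul_const (inner ℝ (gradient f x) v))).add
      ((hasDerivAt_pow 2 t).const_mul (L / 2 * ‖v‖ ^ 2))
    refine HasDerivAt.congr_deriv h3 ?_
    rw [InnerProductSpace.toDual_apply_apply]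
    push_cast
    ring
  have hmono : MonotoneOn
      (fun t : ℝ => f (x + t • v) - t * inner ℝ (gradient f x) v + L / 2 * ‖v‖ ^ 2 * t ^ 2)
      (Set.Ici 0) := by
    apply monotoneOn_of_deriv_nonneg (convex_Ici 0)
    · exact fun t _ => (hd t).continuousAt.continuousWithinAt
    · exact fun t _ => (hd t).differentiableAt.differentiableWithinAt
    · intro t ht
      rw [interior_Ici] at ht
      have ht0 : 0 < t := ht
      rw [(hd t).deriv, ← inner_sub_left]
      have h1 := abs_real_inner_le_norm (gradient f (x + t • v) - gradient f x) v
      have h2 : ‖gradient f (x + t • v) - gradient f x‖ ≤ L * (t * ‖v‖) := by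
        have := hLip.dist_le_mul (x + t • v) x
        rw [dist_eq_norm, dist_eq_norm, add_sub_cancel_left, norm_smul, Real.norm_eq_abs,
          abs_of_pos ht0] at this
        exact this
      have h3 := mul_le_mul_of_nonneg_right h2 (norm_nonneg v)
      have h4 := neg_abs_le (inner ℝ (gradient f (x + t • v) - gradient f x) v)
      nlinarith
  have := hmono (Set.mem_Ici.2 le_rfl) (Set.mem_Ici.2 zero_le_one) zero_le_one
  simp only [zero_smul, one_smul, add_zero] at this
  linarith

/-- **Biased descent lemma** (actor–critic): `V` is the true objective, `e` the critic's
bias with `|e| ≤ ε` and `‖∇e‖ ≤ ε`, `Ṽ = V + e` the biased estimate with `L`-Lipschitz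
gradient, `G` an unbiased bounded estimate of `∇V(θ₀)`, and `Θ'` the parameter chosen by
the Lookback rule, satisfying `Ṽ(Θ') ≥ Ṽ(θ₀ + ηG)` almost surely. Then the expected
true value of `Θ'` satisfies the biased descent inequality. -/
theorem biased_descent_step
    {H : Type*} [NormedAddCommGroup H] [InnerProductSpace ℝ H] [FiniteDimensional ℝ H]
    [MeasurableSpace H] [BorelSpace H]
    (V e : H → ℝ) (hV : Differentiable ℝ V) (he : Differentiable ℝ e)
    (L : ℝ) (hL : 0 ≤ L)
    (hLip : LipschitzWith ⟨L, hL⟩ (gradient (fun θ => V θ + e θ)))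
    (ε : ℝ) (hε : 0 ≤ ε)
    (hebdd : ∀ θ, |e θ| ≤ ε) (hgradebdd : ∀ θ, ‖gradient e θ‖ ≤ ε)
    {Ω : Type*} [MeasurableSpace Ω] (μ : Measure Ω) [IsProbabilityMeasure μ]
    (θ₀ : H) (η : ℝ) (hη : 0 ≤ η)
    (G : Ω → H) (hGmeas : Measurable G)
    (hunbiased : ∫ ω, G ω ∂μ = gradient V θ₀)
    (Gmax : ℝ) (hGbdd : ∀ᵐ ω ∂μ, ‖G ω‖ ≤ Gmax)
    (Θ' : Ω → H) (hΘmeas : Measurable Θ')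
    (hVint : Integrable (fun ω => V (Θ' ω)) μ)
    (haccept : ∀ᵐ ω ∂μ, V (Θ' ω) + e (Θ' ω) ≥ V (θ₀ + η • G ω) + e (θ₀ + η • G ω)) :
    ∫ ω, V (Θ' ω) ∂μ
      ≥ V θ₀ + η * ‖gradient V θ₀‖ ^ 2 - L / 2 * η ^ 2 * ∫ ω, ‖G ω‖ ^ 2 ∂μ
        - 2 * ε - η * ε * ‖gradient V θ₀‖ := by
  have hGint : Integrable G μ :=
    Integrable.of_bound hGmeas.aestronglyMeasurable Gmax hGbdd
  have hG2int : Integrable (fun ω => ‖G ω‖ ^ 2) μ := by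
    refine Integrable.of_bound (hGmeas.norm.pow_const 2).aestronglyMeasurable (Gmax ^ 2) ?_
    filter_upwards [hGbdd] with ω hω
    rw [Real.norm_of_nonneg (by positivity)]
    gcongr
  have hgrad : gradient (fun θ => V θ + e θ) θ₀ = gradient V θ₀ + gradient e θ₀ := by
    have := (hV θ₀).hasGradientAt.hasFDerivAt.add (he θ₀).hasGradientAt.hasFDerivAt
    rw [← map_add] at this
    exact HasGradientAt.gradient this
  set g := gradient V θ₀ + gradient e θ₀ with hg
  have hint1 : Integrable (fun ω => inner ℝ g (G ω)) μ := hGint.const_inner g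
  have hpt : ∀ᵐ ω ∂μ, (V θ₀ - 2 * ε) + η * inner ℝ g (G ω) - L / 2 * η ^ 2 * ‖G ω‖ ^ 2
      ≤ V (Θ' ω) := by
    filter_upwards [haccept] with ω hω
    have h1 := quad_lower_bound (fun θ => V θ + e θ) (hV.add he) L hL hLip θ₀ (η • G ω)
    rw [hgrad, inner_smul_right, norm_smul, mul_pow, Real.norm_eq_abs, sq_abs] at h1
    have h2 := abs_le.1 (hebdd θ₀)
    have h3 := abs_le.1 (hebdd (Θ' ω))
    linarith [h2.1, h3.2]
  have hI := integral_mono_ae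
    (((integrable_const (V θ₀ - 2 * ε)).add (hint1.const_mul η)).sub
      (hG2int.const_mul (L / 2 * η ^ 2))) hVint hpt
  have hE : ∫ ω, ((V θ₀ - 2 * ε) + η * inner ℝ g (G ω) - L / 2 * η ^ 2 * ‖G ω‖ ^ 2) ∂μ
      = (V θ₀ - 2 * ε) + η * inner ℝ g (gradient V θ₀)
        - L / 2 * η ^ 2 * ∫ ω, ‖G ω‖ ^ 2 ∂μ := by
    have hA : Integrable (fun ω => (V θ₀ - 2 * ε) + η * inner ℝ g (G ω)) μ :=
      (integrable_const _).add (hint1.const_mul η)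
    rw [integral_sub hA (hG2int.const_mul _),
      integral_add (integrable_const _) (hint1.const_mul η), integral_const_mul,
      integral_const_mul, integral_inner hGint, hunbiased]
    simp
  have hI' := hE.symm.le.trans hI
  have h5 : inner ℝ g (gradient V θ₀) = ‖gradient V θ₀‖ ^ 2
      + inner ℝ (gradient e θ₀) (gradient V θ₀) := by
    rw [hg, inner_add_left, real_inner_self_eq_norm_sq]
  have h6 : -(ε * ‖gradient V θ₀‖) ≤ inner ℝ (gradient e θ₀) (gradient V θ₀) := by
    have a := abs_real_inner_le_norm (gradient e θ₀) (gradient V θ₀)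
    have b := mul_le_mul_of_nonneg_right (hgradebdd θ₀) (norm_nonneg (gradient V θ₀))
    linarith [neg_abs_le (inner ℝ (gradient e θ₀) (gradient V θ₀))]
  have h7 := mul_le_mul_of_nonneg_left h6 hη
  rw [h5] at hI'
  linarith
end

section
/- Let T be a positive natural number, K ≥ 0, M ∈ ℝ, and let v : ℕ → ℝ and a : ℕ → ℝ satisfy a(t) ≥ 0 for all t, v(t) ≤ M for all t ≤ T, and v(t+1) ≥ v(t) + η · a(t) − K · η² for all t < T, where η = 1/√T. Then there exists t < T with √(a(t)) ≤ √(M − v(0) + K) · T^{−1/4}. -/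
open Real

/-- **Rate extraction for the convergence theorem**: with step size `η = 1/√T`, the
per-step descent inequality yields an iterate `t < T` whose quantity `√(a t)` (the
gradient norm) is at most `√(M − v 0 + K) · T^(−1/4)`. -/
theorem rate_extraction
    (T : ℕ) (hT : 0 < T) (K : ℝ) (hK : 0 ≤ K) (M : ℝ)
    (η : ℝ) (hη : η = 1 / Real.sqrt T)
    (v a : ℕ → ℝ)
    (ha : ∀ t, 0 ≤ a t)
    (hvM : ∀ t ≤ T, v t ≤ M)
    (hstep : ∀ t < T, v (t + 1) ≥ v t + η * a t - K * η ^ 2) :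
    ∃ t < T, Real.sqrt (a t) ≤ Real.sqrt (M - v 0 + K) * (T : ℝ) ^ (-(1 / 4 : ℝ)) := by
  have hTr : (0 : ℝ) < T := by exact_mod_cast hT
  have hs : 0 < Real.sqrt T := Real.sqrt_pos.mpr hTr
  have hη0 : 0 < η := by rw [hη]; positivity
  have hTη : (T : ℝ) * η ^ 2 = 1 := by
    rw [hη, div_pow, Real.sq_sqrt hTr.le]
    field_simp
  obtain ⟨t, ht, hmin⟩ := Finset.exists_min_image (Finset.range T) a
    ⟨0, Finset.mem_range.mpr hT⟩
  have key : ∀ n : ℕ, n ≤ T → v 0 + n * (η * a t - K * η ^ 2) ≤ v n := by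
    intro n
    induction n with
    | zero => intro _; simp
    | succ n ih =>
      intro hn
      have h1 := ih (by omega)
      have h2 := hstep n (by omega)
      have h3 := mul_le_mul_of_nonneg_left (hmin n (Finset.mem_range.mpr (by omega))) hη0.le
      push_cast
      linarith
  have h1 := (key T le_rfl).trans (hvM T le_rfl)
  have h2 : T * η * a t ≤ M - v 0 + K := by
    have : (T : ℝ) * (η * a t - K * η ^ 2) = T * η * a t - K * (T * η ^ 2) := by ring
    rw [this, hTη] at h1
    linarith
  have h3 : a t ≤ (M - v 0 + K) * η := by
    have h4 := mul_le_mul_of_nonneg_right h2 hη0.le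
    have : T * η * a t * η = (T * η ^ 2) * a t := by ring
    rw [this, hTη] at h4
    linarith
  have h5 : (T : ℝ) ^ (-(1 / 4 : ℝ)) = Real.sqrt η := by
    rw [hη, Real.sqrt_eq_rpow, Real.sqrt_eq_rpow, one_div ((T : ℝ) ^ _),
      ← Real.rpow_neg hTr.le, ← Real.rpow_mul hTr.le]
    norm_num
  refine ⟨t, Finset.mem_range.mp ht, ?_⟩
  rw [h5, ← Real.sqrt_mul' _ hη0.le]
  exact Real.sqrt_le_sqrt h3
end

section
/- Let T be a positive natural number, C ≥ 0, M ∈ ℝ, ε ∈ [0, 1), and let v : ℕ → ℝ and a : ℕ → ℝ satisfy a(t) ≥ 0 for all t, v(t) ≤ M for all t ≤ T, and η · (1 − ε) · min(a(t), a(t)²) ≤ v(t+1) − v(t) + η² · C for all t < T, where η = 1/√T. Then min over t < T of min(a(t), a(t)²) is at most (M − v(0) + C) / ((1 − ε) · √T). -/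
open Real

/-- **Convergence with a biased critic (sequence-level argument)**: with step size
`η = 1/√T`, a per-step inequality `η(1−ε)·min(a t, (a t)²) ≤ v(t+1) − v(t) + η²C` and
values bounded above by `M` force some iterate `t < T` to satisfy
`min(a t, (a t)²) ≤ (M − v 0 + C)/((1−ε)√T)`. -/
theorem biased_convergence_rate
    (T : ℕ) (hT : 0 < T) (C : ℝ) (hC : 0 ≤ C) (M : ℝ)
    (ε : ℝ) (hε0 : 0 ≤ ε) (hε1 : ε < 1)
    (η : ℝ) (hη : η = 1 / Real.sqrt T)
    (v a : ℕ → ℝ)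
    (ha : ∀ t, 0 ≤ a t)
    (hvM : ∀ t ≤ T, v t ≤ M)
    (hstep : ∀ t < T, η * (1 - ε) * min (a t) ((a t) ^ 2) ≤ v (t + 1) - v t + η ^ 2 * C) :
    ∃ t < T, min (a t) ((a t) ^ 2) ≤ (M - v 0 + C) / ((1 - ε) * Real.sqrt T) := by
  by_contra! h
  have hT' : (0 : ℝ) < T := by exact_mod_cast hT
  have hs : 0 < Real.sqrt T := Real.sqrt_pos.mpr hT'
  have hss : Real.sqrt T ^ 2 = T := Real.sq_sqrt hT'.le
  have h1 : 0 < 1 - ε := by linarith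
  have hηpos : 0 < η := by rw [hη]; positivity
  have hη2 : η ^ 2 = 1 / T := by rw [hη, div_pow, hss, one_pow]
  have key : ∀ t < T, (M - v 0 + C) / T < v (t + 1) - v t + C / T := by
    intro t ht
    have h2 := mul_lt_mul_of_pos_left (h t ht) (mul_pos hηpos h1)
    have h3 : η * (1 - ε) * ((M - v 0 + C) / ((1 - ε) * Real.sqrt T)) = (M - v 0 + C) / T := by
      rw [← hss, hη]
      field_simp
      rw [hss]
      ring
    have h4 := hstep t ht
    rw [hη2, one_div_mul_eq_div] at h4
    linarith
  have hsum : ∑ t ∈ Finset.range T, (M - v 0 + C) / (T : ℝ)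
      < ∑ t ∈ Finset.range T, ((v (t + 1) - v t) + C / T) :=
    Finset.sum_lt_sum_of_nonempty (Finset.nonempty_range_iff.mpr hT.ne')
      (fun t ht => key t (Finset.mem_range.mp ht))
  rw [Finset.sum_add_distrib, Finset.sum_range_sub] at hsum
  simp only [Finset.sum_const, Finset.card_range, nsmul_eq_mul] at hsum
  rw [mul_div_cancel₀ _ hT'.ne', mul_div_cancel₀ _ hT'.ne'] at hsum
  linarith [hvM T le_rfl]
end
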